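/- Let u be a C² convex function on a neighborhood of the closed disc B̄_t(0) ⊂ ℝ² with u(0) = 0, u ≥ 0, and det D²u ≥ C₀⁻¹ > 0, and let b := sup_{B̄_t(0)}|Du|. Suppose m > 0 and τ ∈ (0, t] are such that u(x₁, 0) ≤ m for all x₁ ∈ (−τ, t). Then 64·C₀·b/t² ≥ ∫₀^{t/4} (m + 2b·x₂)⁻¹ dx₂, and consequently exp(128·C₀·b²/t²) ≥ 1 + (b·t/2)/m. -/

import Mathlib

open Metric Set MeasureTheory

noncomputable section

abbrev E2 : Type := EuclideanSpace ℝ (Fin 2)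

/-- The point of `ℝ²` with coordinates `(a, b)`. -/
def pt (a b : ℝ) : E2 := (WithLp.equiv 2 (Fin 2 → ℝ)).symm ![a, b]

/-- The standard basis vectors of `ℝ²`. -/
def e2 (i : Fin 2) : E2 := EuclideanSpace.single i 1

/-- The Hessian matrix `D²u(x)`. -/
def hess (u : E2 → ℝ) (x : E2) : Matrix (Fin 2) (Fin 2) ℝ :=
  Matrix.of fun i j => iteratedFDeriv ℝ 2 u x ![e2 i, e2 j]

/-- The determinant of the Hessian, `det D²u(x)`. -/
def detHess (u : E2 → ℝ) (x : E2) : ℝ := (hess u x).det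

/-- The operator norm of a `2 × 2` real matrix. -/
def opNorm2 (M : Matrix (Fin 2) (Fin 2) ℝ) : ℝ :=
  ‖(Matrix.toEuclideanCLM (𝕜 := ℝ) M : E2 →L[ℝ] E2)‖

/-- The partial Legendre transform of `u` in the `e₁`-direction (relative to `B_R(0)`). -/
def pLeg (R : ℝ) (u : E2 → ℝ) (y : E2) : ℝ :=
  sSup ((fun x₁ => x₁ * y 0 - u (pt x₁ (y 1))) '' {x₁ : ℝ | pt x₁ (y 1) ∈ ball (0:E2) R})

/-- The partial Legendre map `𝒫(x₁,x₂) = (∂_{x₁}u(x), x₂)`. -/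
def Pmap (u : E2 → ℝ) (x : E2) : E2 := pt (fderiv ℝ u x (e2 0)) (x 1)

/-!
On a horizontal slice of the disc at height `x₂`, convexity and `0 ≤ u ≤ m + 2 b x₂` bound the
increment of `∂₁u`, hence `∫ ∂₁₁u`, from above. Since `∂₁₁u · ∂₂₂u ≥ det D²u ≥ C₀⁻¹`, the
Cauchy-Schwarz inequality turns this into a lower bound for `∫ ∂₂₂u` on the slice, proportional to
`(m + 2 b x₂)⁻¹`. Integrating over the heights and exchanging the integrals, the total is at most
the increment of `∂₂u` along vertical lines, which is at most `2 b`.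
-/

section IntervalIntegral

variable {a c : ℝ}

lemma two_mul_sub_sq_mul_le_div {A B κ : ℝ} (hκ : 0 < κ) (hA : 0 ≤ A) (hAB : κ ≤ A * B) (r : ℝ) :
    2 * r - r ^ 2 * A ≤ B / κ := by
  have hA_pos : 0 < A := hA.lt_of_ne fun h => by rw [← h, zero_mul] at hAB; linarith
  calc 2 * r - r ^ 2 * A ≤ 1 / A := by
        rw [le_div_iff₀ hA_pos]
        nlinarith [sq_nonneg (r * A - 1)]
    _ ≤ B / κ := by
        rw [div_le_div_iff₀ hA_pos hκ]
        linarith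

-- The tangent-line bound `2 r - r² A ≤ A⁻¹` at the single slope `r = (c - a) / K` replaces the
-- Cauchy-Schwarz inequality `(c - a)² ≤ ∫ A * ∫ A⁻¹`.
lemma mul_sq_sub_div_le_integral_of_le_mul {A B : ℝ → ℝ} {κ K : ℝ} (hac : a ≤ c) (hκ : 0 < κ)
    (hK : 0 < K) (hA_int : IntervalIntegrable A volume a c)
    (hB_int : IntervalIntegrable B volume a c) (hA : ∀ s ∈ Icc a c, 0 ≤ A s)
    (hAB : ∀ s ∈ Icc a c, κ ≤ A s * B s) (hAK : ∫ s in a..c, A s ≤ K) :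
    κ * (c - a) ^ 2 / K ≤ ∫ s in a..c, B s := by
  set r := (c - a) / K with hr
  have htangent_int : IntervalIntegrable (fun s => 2 * r - r ^ 2 * A s) volume a c :=
    intervalIntegrable_const.sub (hA_int.const_mul _)
  have htangent : 2 * r * (c - a) - r ^ 2 * ∫ s in a..c, A s ≤ (∫ s in a..c, B s) / κ :=
    calc 2 * r * (c - a) - r ^ 2 * ∫ s in a..c, A s
        = ∫ s in a..c, (2 * r - r ^ 2 * A s) := by
          rw [intervalIntegral.integral_sub intervalIntegrable_const (hA_int.const_mul _),
            intervalIntegral.integral_const, intervalIntegral.integral_const_mul, smul_eq_mul,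
            mul_comm (2 * r)]
      _ ≤ ∫ s in a..c, B s / κ :=
          intervalIntegral.integral_mono_on hac htangent_int (hB_int.div_const κ) fun s hs =>
            two_mul_sub_sq_mul_le_div hκ (hA s hs) (hAB s hs) r
      _ = (∫ s in a..c, B s) / κ := intervalIntegral.integral_div κ B
  calc κ * (c - a) ^ 2 / K = (2 * r * (c - a) - r ^ 2 * K) * κ := by
        rw [hr]
        field_simp
        ring
    _ ≤ (2 * r * (c - a) - r ^ 2 * ∫ s in a..c, A s) * κ := by gcongr
    _ ≤ ∫ s in a..c, B s := (le_div_iff₀ hκ).1 htangent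

lemma integral_le_mul_sub_of_slice_bounds {F : ℝ → ℝ → ℝ} {g : ℝ → ℝ} {α β K : ℝ} (hac : a ≤ c)
    (hαβ : α ≤ β) (hF : ContinuousOn (Function.uncurry F) (Icc a c ×ˢ Icc α β))
    (hg_int : IntervalIntegrable g volume α β)
    (hg : ∀ y ∈ Icc α β, g y ≤ ∫ s in a..c, F s y)
    (hK : ∀ s ∈ Icc a c, ∫ y in α..β, F s y ≤ K) :
    ∫ y in α..β, g y ≤ K * (c - a) := by
  have hF_int : Integrable (Function.uncurry F)
      ((volume.restrict (Ioc a c)).prod (volume.restrict (Ioc α β))) := by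
    rw [Measure.prod_restrict, ← Measure.volume_eq_prod]
    exact (hF.integrableOn_compact (isCompact_Icc.prod isCompact_Icc)).mono_set
      (prod_mono Ioc_subset_Icc_self Ioc_subset_Icc_self)
  have hrow_int : IntervalIntegrable (fun y => ∫ s in a..c, F s y) volume α β := by
    simp only [intervalIntegral.integral_of_le hac,
      intervalIntegrable_iff_integrableOn_Ioc_of_le hαβ]
    exact hF_int.integral_prod_right
  have hcol_int : IntervalIntegrable (fun s => ∫ y in α..β, F s y) volume a c := by
    simp only [intervalIntegral.integral_of_le hαβ,
      intervalIntegrable_iff_integrableOn_Ioc_of_le hac]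
    exact hF_int.integral_prod_left
  calc ∫ y in α..β, g y ≤ ∫ y in α..β, ∫ s in a..c, F s y :=
        intervalIntegral.integral_mono_on hαβ hg_int hrow_int hg
    _ = ∫ s in a..c, ∫ y in α..β, F s y := by
        refine (intervalIntegral_intervalIntegral_swap ?_).symm
        rwa [uIoc_of_le hac, uIoc_of_le hαβ, IntegrableOn, Measure.volume_eq_prod,
          ← Measure.prod_restrict]
    _ ≤ ∫ _ in a..c, K :=
        intervalIntegral.integral_mono_on hac hcol_int intervalIntegrable_const hK
    _ = K * (c - a) := by rw [intervalIntegral.integral_const, smul_eq_mul, mul_comm]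

lemma integral_inv_add_mul {m k h : ℝ} (hm : 0 < m) (hk : 0 < k) (hh : 0 ≤ h) :
    ∫ y in (0 : ℝ)..h, (m + k * y)⁻¹ = Real.log (1 + k * h / m) / k := by
  rw [intervalIntegral.integral_comp_add_mul (fun y => y⁻¹) hk.ne', mul_zero, add_zero,
    integral_inv_of_pos hm (by positivity), add_div, div_self hm.ne', smul_eq_mul, inv_mul_eq_div]

lemma one_add_mul_div_le_exp_of_integral_inv_le {m k h K : ℝ} (hm : 0 < m) (hk : 0 ≤ k)
    (hh : 0 ≤ h) (hK : ∫ y in (0 : ℝ)..h, (m + k * y)⁻¹ ≤ K) :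
    1 + k * h / m ≤ Real.exp (k * K) := by
  rcases hk.eq_or_lt with rfl | hk_pos
  · simp
  · rw [integral_inv_add_mul hm hk_pos hh, div_le_iff₀' hk_pos] at hK
    exact (Real.log_le_iff_le_exp (by positivity)).1 hK

end IntervalIntegral

lemma deriv_sub_deriv_le_of_convexOn {φ : ℝ → ℝ} {a c δ φ'a φ'c : ℝ} (hac : a ≤ c) (hδ : 0 < δ)
    (hφ : ConvexOn ℝ (Icc (a - δ) (c + δ)) φ) (ha : HasDerivAt φ φ'a a)
    (hc : HasDerivAt φ φ'c c) :
    φ'c - φ'a ≤ ((φ (c + δ) - φ c) + (φ (a - δ) - φ a)) / δ := by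
  have hright : φ'c ≤ (φ (c + δ) - φ c) / δ := by
    have := hφ.le_slope_of_hasDerivAt (x := c) (y := c + δ) ⟨by linarith, by linarith⟩
      ⟨by linarith, le_rfl⟩ (by linarith) hc
    rwa [slope_def_field, add_sub_cancel_left] at this
  have hleft : (φ a - φ (a - δ)) / δ ≤ φ'a := by
    have := hφ.slope_le_of_hasDerivAt (x := a - δ) (y := a) ⟨le_rfl, by linarith⟩
      ⟨by linarith, by linarith⟩ (by linarith) ha
    rwa [slope_def_field, sub_sub_cancel] at this
  calc φ'c - φ'a ≤ (φ (c + δ) - φ c) / δ - (φ a - φ (a - δ)) / δ := sub_le_sub hright hleft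
    _ = ((φ (c + δ) - φ c) + (φ (a - δ) - φ a)) / δ := by ring

section SecondDirDeriv

variable {E : Type*} [NormedAddCommGroup E] [NormedSpace ℝ E] {u : E → ℝ} {S : Set E} {x v w : E}

/-- The second derivative `D²u(x)[v, v]` of `u` at `x` in the direction `v`. It is meaningful where
`fderiv ℝ u` is differentiable, and has a junk value elsewhere. -/
def secondDirDeriv (u : E → ℝ) (v x : E) : ℝ := fderiv ℝ (fderiv ℝ u) x v v

lemma hasDerivAt_comp_add_smul {F : Type*} [NormedAddCommGroup F] [NormedSpace ℝ F] {g : E → F}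
    {s : ℝ} (hg : DifferentiableAt ℝ g (x + s • v)) :
    HasDerivAt (fun r : ℝ => g (x + r • v)) (fderiv ℝ g (x + s • v) v) s := by
  have hline : HasDerivAt (fun r : ℝ => x + r • v) v s := by
    simpa using ((hasDerivAt_id s).smul_const v).const_add x
  exact hg.hasFDerivAt.comp_hasDerivAt s hline

lemma hasDerivAt_fderiv_comp_add_smul {s : ℝ} (hu : ContDiffAt ℝ 2 u (x + s • v)) :
    HasDerivAt (fun r : ℝ => fderiv ℝ u (x + r • v) v) (secondDirDeriv u v (x + s • v)) s := by
  have hfderiv : DifferentiableAt ℝ (fderiv ℝ u) (x + s • v) :=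
    (hu.fderiv_right (m := 1) (by norm_num)).differentiableAt (by norm_num)
  simpa [secondDirDeriv] using
    (hasDerivAt_comp_add_smul hfderiv).clm_apply (hasDerivAt_const s v)

lemma continuousOn_secondDirDeriv (hS : IsOpen S) (hu : ContDiffOn ℝ 2 u S) :
    ContinuousOn (secondDirDeriv u v) S :=
  (((hu.fderiv_of_isOpen (m := 1) hS (by norm_num)).continuousOn_fderiv_of_isOpen hS
    (by norm_num)).clm_apply continuousOn_const).clm_apply continuousOn_const

lemma convexOn_comp_add_smul (hconv : ConvexOn ℝ S u) (x v : E) :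
    ConvexOn ℝ {s : ℝ | x + s • v ∈ S} fun s => u (x + s • v) := by
  have hline : ∀ s : ℝ, AffineMap.lineMap x (x + v) s = x + s • v := fun s => by
    simp [AffineMap.lineMap_apply, add_comm]
  simpa only [Function.comp_def, preimage, hline] using
    hconv.comp_affineMap (AffineMap.lineMap x (x + v))

lemma secondDirDeriv_nonneg (hS : IsOpen S) (hu : ContDiffOn ℝ 2 u S) (hconv : ConvexOn ℝ S u)
    (hx : x ∈ S) (v : E) : 0 ≤ secondDirDeriv u v x := by
  set T : Set ℝ := {s | x + s • v ∈ S}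
  have hT : IsOpen T := hS.preimage (by fun_prop)
  have hT_zero : (0 : ℝ) ∈ T := by simpa [T] using hx
  have hu_at : ∀ s ∈ T, ContDiffAt ℝ 2 u (x + s • v) := fun s hs =>
    hu.contDiffAt (hS.mem_nhds hs)
  have hderiv : ∀ s ∈ T, HasDerivAt (fun r : ℝ => u (x + r • v)) (fderiv ℝ u (x + s • v) v) s :=
    fun s hs => hasDerivAt_comp_add_smul ((hu_at s hs).differentiableAt (by norm_num))
  have hmono : MonotoneOn (fun s : ℝ => fderiv ℝ u (x + s • v) v) T :=
    ((convexOn_comp_add_smul hconv x v).monotoneOn_deriv fun s hs =>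
      (hderiv s hs).differentiableAt).congr fun s hs => (hderiv s hs).deriv
  have hnonneg := hmono.derivWithin_nonneg (x := 0)
  rw [derivWithin_of_isOpen hT hT_zero,
    (hasDerivAt_fderiv_comp_add_smul (hu_at 0 hT_zero)).deriv] at hnonneg
  simpa using hnonneg

lemma intervalIntegrable_secondDirDeriv_add_smul {a c : ℝ} (hS : IsOpen S)
    (hu : ContDiffOn ℝ 2 u S) (hline : ∀ s ∈ uIcc a c, x + s • v ∈ S) :
    IntervalIntegrable (fun s : ℝ => secondDirDeriv u w (x + s • v)) volume a c :=
  ((continuousOn_secondDirDeriv hS hu).comp (by fun_prop) hline).intervalIntegrable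

lemma integral_secondDirDeriv {a c : ℝ} (hS : IsOpen S) (hu : ContDiffOn ℝ 2 u S)
    (hline : ∀ s ∈ uIcc a c, x + s • v ∈ S) :
    ∫ s in a..c, secondDirDeriv u v (x + s • v) =
      fderiv ℝ u (x + c • v) v - fderiv ℝ u (x + a • v) v :=
  intervalIntegral.integral_eq_sub_of_hasDerivAt
    (fun s hs => hasDerivAt_fderiv_comp_add_smul (hu.contDiffAt (hS.mem_nhds (hline s hs))))
    (intervalIntegrable_secondDirDeriv_add_smul hS hu hline)

lemma integral_secondDirDeriv_le_of_abs_fderiv_le {a c b : ℝ} (hS : IsOpen S)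
    (hu : ContDiffOn ℝ 2 u S) (hb : ∀ z ∈ S, |fderiv ℝ u z v| ≤ b)
    (hline : ∀ s ∈ uIcc a c, x + s • v ∈ S) :
    ∫ s in a..c, secondDirDeriv u v (x + s • v) ≤ 2 * b := by
  have hc := abs_le.1 (hb _ (hline c right_mem_uIcc))
  have ha := abs_le.1 (hb _ (hline a left_mem_uIcc))
  rw [integral_secondDirDeriv hS hu hline]
  linarith

lemma integral_secondDirDeriv_le_of_convexOn {a c δ M : ℝ} (hS : IsOpen S)
    (hu : ContDiffOn ℝ 2 u S) (hconv : ConvexOn ℝ S u) (hpos : ∀ z ∈ S, 0 ≤ u z) (hac : a ≤ c)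
    (hδ : 0 < δ) (hline : ∀ s ∈ Icc (a - δ) (c + δ), x + s • v ∈ S)
    (hleft : u (x + (a - δ) • v) ≤ M) (hright : u (x + (c + δ) • v) ≤ M) :
    ∫ s in a..c, secondDirDeriv u v (x + s • v) ≤ 2 * M / δ := by
  have hinner : ∀ s ∈ Icc a c, x + s • v ∈ S := fun s hs =>
    hline s ⟨by linarith [hs.1], by linarith [hs.2]⟩
  have hderiv : ∀ s ∈ Icc a c,
      HasDerivAt (fun r : ℝ => u (x + r • v)) (fderiv ℝ u (x + s • v) v) s := fun s hs =>
    hasDerivAt_comp_add_smul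
      ((hu.contDiffAt (hS.mem_nhds (hinner s hs))).differentiableAt (by norm_num))
  have ha : a ∈ Icc a c := left_mem_Icc.2 hac
  have hc : c ∈ Icc a c := right_mem_Icc.2 hac
  rw [integral_secondDirDeriv hS hu (by rwa [uIcc_of_le hac])]
  calc fderiv ℝ u (x + c • v) v - fderiv ℝ u (x + a • v) v
      ≤ ((u (x + (c + δ) • v) - u (x + c • v)) + (u (x + (a - δ) • v) - u (x + a • v))) / δ :=
        deriv_sub_deriv_le_of_convexOn hac hδ
          ((convexOn_comp_add_smul hconv x v).subset hline (convex_Icc _ _))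
          (hderiv a ha) (hderiv c hc)
    _ ≤ 2 * M / δ := by
        gcongr
        linarith [hpos _ (hinner a ha), hpos _ (hinner c hc)]

lemma le_integral_secondDirDeriv_of_le_mul {a c δ M κ : ℝ} (hS : IsOpen S)
    (hu : ContDiffOn ℝ 2 u S) (hconv : ConvexOn ℝ S u) (hpos : ∀ z ∈ S, 0 ≤ u z) (hκ : 0 < κ)
    (hκ_le : ∀ z ∈ S, κ ≤ secondDirDeriv u v z * secondDirDeriv u w z) (hac : a ≤ c) (hδ : 0 < δ)
    (hM : 0 < M) (hline : ∀ s ∈ Icc (a - δ) (c + δ), x + s • v ∈ S)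
    (hleft : u (x + (a - δ) • v) ≤ M) (hright : u (x + (c + δ) • v) ≤ M) :
    κ * δ * (c - a) ^ 2 / 2 * M⁻¹ ≤ ∫ s in a..c, secondDirDeriv u w (x + s • v) := by
  have hinner : ∀ s ∈ Icc a c, x + s • v ∈ S := fun s hs =>
    hline s ⟨by linarith [hs.1], by linarith [hs.2]⟩
  have hinner' : ∀ s ∈ uIcc a c, x + s • v ∈ S := by rwa [uIcc_of_le hac]
  calc κ * δ * (c - a) ^ 2 / 2 * M⁻¹ = κ * (c - a) ^ 2 / (2 * M / δ) := by field_simp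
    _ ≤ ∫ s in a..c, secondDirDeriv u w (x + s • v) :=
        mul_sq_sub_div_le_integral_of_le_mul hac hκ (by positivity)
          (intervalIntegrable_secondDirDeriv_add_smul hS hu hinner')
          (intervalIntegrable_secondDirDeriv_add_smul hS hu hinner')
          (fun s hs => secondDirDeriv_nonneg hS hu hconv (hinner s hs) v)
          (fun s hs => hκ_le _ (hinner s hs))
          (integral_secondDirDeriv_le_of_convexOn hS hu hconv hpos hac hδ hline hleft hright)

lemma integral_inv_le_of_convexOn_of_le_mul {a c δ α β b κ : ℝ} {M : ℝ → ℝ} (hS : IsOpen S)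
    (hu : ContDiffOn ℝ 2 u S) (hconv : ConvexOn ℝ S u) (hpos : ∀ z ∈ S, 0 ≤ u z) (hκ : 0 < κ)
    (hκ_le : ∀ z ∈ S, κ ≤ secondDirDeriv u v z * secondDirDeriv u w z)
    (hb : ∀ z ∈ S, |fderiv ℝ u z w| ≤ b) (hac : a < c) (hδ : 0 < δ) (hαβ : α ≤ β)
    (hrect : ∀ s ∈ Icc (a - δ) (c + δ), ∀ y ∈ Icc α β, s • v + y • w ∈ S)
    (hM_cont : ContinuousOn M (Icc α β)) (hM_pos : ∀ y ∈ Icc α β, 0 < M y)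
    (hleft : ∀ y ∈ Icc α β, u ((a - δ) • v + y • w) ≤ M y)
    (hright : ∀ y ∈ Icc α β, u ((c + δ) • v + y • w) ≤ M y) :
    ∫ y in α..β, (M y)⁻¹ ≤ 4 * b / (κ * δ * (c - a)) := by
  have hinner : ∀ s ∈ Icc a c, ∀ y ∈ Icc α β, s • v + y • w ∈ S := fun s hs =>
    hrect s ⟨by linarith [hs.1], by linarith [hs.2]⟩
  have hcont : ContinuousOn (Function.uncurry fun s y : ℝ => secondDirDeriv u w (s • v + y • w))
      (Icc a c ×ˢ Icc α β) :=
    (continuousOn_secondDirDeriv hS hu).comp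
      (f := fun z : ℝ × ℝ => z.1 • v + z.2 • w) (by fun_prop) fun z hz => hinner z.1 hz.1 z.2 hz.2
  have hM_int : IntervalIntegrable (fun y => (M y)⁻¹) volume α β :=
    (hM_cont.inv₀ fun y hy => (hM_pos y hy).ne').intervalIntegrable_of_Icc hαβ
  have hrow : ∀ y ∈ Icc α β, κ * δ * (c - a) ^ 2 / 2 * (M y)⁻¹ ≤
      ∫ s in a..c, secondDirDeriv u w (s • v + y • w) := by
    simp only [add_comm (_ • v)] at hrect hleft hright ⊢
    exact fun y hy => le_integral_secondDirDeriv_of_le_mul hS hu hconv hpos hκ hκ_le hac.le hδ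
      (hM_pos y hy) (fun s hs => hrect s hs y hy) (hleft y hy) (hright y hy)
  have hcol : ∀ s ∈ Icc a c, ∫ y in α..β, secondDirDeriv u w (s • v + y • w) ≤ 2 * b :=
    fun s hs => integral_secondDirDeriv_le_of_abs_fderiv_le hS hu hb
      (by rw [uIcc_of_le hαβ]; exact hinner s hs)
  have htotal : ∫ y in α..β, κ * δ * (c - a) ^ 2 / 2 * (M y)⁻¹ ≤ 2 * b * (c - a) :=
    integral_le_mul_sub_of_slice_bounds hac.le hαβ hcont (hM_int.const_mul _) hrow hcol
  have hca : 0 < c - a := sub_pos.2 hac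
  rw [intervalIntegral.integral_const_mul, ← le_div_iff₀' (by positivity)] at htotal
  refine htotal.trans_eq ?_
  field_simp
  ring

lemma apply_add_smul_le_of_abs_fderiv_le {b y : ℝ} (hdiff : ∀ z ∈ S, DifferentiableAt ℝ u z)
    (hb : ∀ z ∈ S, |fderiv ℝ u z w| ≤ b) (hy : 0 ≤ y) (hline : ∀ r ∈ Icc 0 y, x + r • w ∈ S) :
    u (x + y • w) ≤ u x + b * y := by
  have hmean := norm_image_sub_le_of_norm_deriv_le_segment'
    (fun r hr => (hasDerivAt_comp_add_smul (hdiff _ (hline r hr))).hasDerivWithinAt)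
    (fun r hr => hb _ (hline r (Ico_subset_Icc_self hr))) y (right_mem_Icc.2 hy)
  have := (le_abs_self _).trans hmean
  simp only [zero_smul, add_zero, sub_zero] at this
  linarith

end SecondDirDeriv

lemma abs_fderiv_le_norm_gradient_mul {F : Type*} [NormedAddCommGroup F] [InnerProductSpace ℝ F]
    [CompleteSpace F] (u : F → ℝ) (x v : F) : |fderiv ℝ u x v| ≤ ‖gradient u x‖ * ‖v‖ := by
  rw [← inner_gradient_left]
  exact abs_real_inner_le_norm _ _

lemma norm_e2 (i : Fin 2) : ‖e2 i‖ = 1 := by simp [e2]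

lemma abs_fderiv_e2_le_norm_gradient (u : E2 → ℝ) (x : E2) (i : Fin 2) :
    |fderiv ℝ u x (e2 i)| ≤ ‖gradient u x‖ := by
  simpa only [norm_e2, mul_one] using abs_fderiv_le_norm_gradient_mul u x (e2 i)

lemma pt_eq_smul_add_smul (x₁ x₂ : ℝ) : pt x₁ x₂ = x₁ • e2 0 + x₂ • e2 1 := by
  ext i
  fin_cases i <;> simp [pt, e2]

lemma smul_e2_add_smul_e2_mem_ball {t x₁ x₂ : ℝ} (ht : 0 < t) (h : x₁ ^ 2 + x₂ ^ 2 < t ^ 2) :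
    x₁ • e2 0 + x₂ • e2 1 ∈ ball (0 : E2) t := by
  rw [mem_ball_zero_iff, EuclideanSpace.norm_eq, Real.sqrt_lt' ht]
  simpa [e2] using h

lemma detHess_le_secondDirDeriv_mul {u : E2 → ℝ} {x : E2} (hu : ContDiffAt ℝ 2 u x) :
    detHess u x ≤ secondDirDeriv u (e2 0) x * secondDirDeriv u (e2 1) x := by
  have hsymm := hu.isSymmSndFDerivAt (by simp) (e2 0) (e2 1)
  simp only [detHess, hess, Matrix.det_fin_two, Matrix.of_apply, iteratedFDeriv_two_apply,
    Matrix.cons_val_zero, Matrix.cons_val_one, hsymm, secondDirDeriv]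
  linarith [mul_self_nonneg (fderiv ℝ (fderiv ℝ u) x (e2 1) (e2 0))]

theorem modulus_of_convexity_integral_inequality_general
    {t C₀ b m : ℝ} (ht : 0 < t) (hC₀ : 0 < C₀) (hm : 0 < m) {u : E2 → ℝ}
    (hu : ContDiffOn ℝ 2 u (ball 0 t)) (hconv : ConvexOn ℝ (ball 0 t) u)
    (hpos : ∀ x ∈ ball 0 t, 0 ≤ u x) (hdet : ∀ x ∈ ball 0 t, C₀⁻¹ ≤ detHess u x)
    (hb : ∀ x ∈ ball 0 t, ‖gradient u x‖ ≤ b) (haxis : ∀ x₁ ∈ Ioo 0 t, u (pt x₁ 0) ≤ m) :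
    (∫ x₂ in (0 : ℝ)..(t / 4), (m + 2 * b * x₂)⁻¹) ≤ 64 * C₀ * b / t ^ 2 ∧
    1 + (b * t / 2) / m ≤ Real.exp (128 * C₀ * b ^ 2 / t ^ 2) := by
  have hu_at : ∀ x ∈ ball (0 : E2) t, ContDiffAt ℝ 2 u x := fun x hx =>
    hu.contDiffAt (isOpen_ball.mem_nhds hx)
  have hb_nonneg : 0 ≤ b := (norm_nonneg _).trans (hb 0 (mem_ball_self ht))
  have hb_vert : ∀ x ∈ ball 0 t, |fderiv ℝ u x (e2 1)| ≤ b := fun x hx =>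
    (abs_fderiv_e2_le_norm_gradient u x 1).trans (hb x hx)
  have hrect : ∀ x₁ ∈ Icc (t / 4 - t / 8) (3 * t / 4 + t / 8), ∀ x₂ ∈ Icc 0 (t / 4),
      x₁ • e2 0 + x₂ • e2 1 ∈ ball 0 t := fun x₁ h₁ x₂ h₂ =>
    smul_e2_add_smul_e2_mem_ball ht (by nlinarith [h₁.1, h₁.2, h₂.1, h₂.2])
  have hgrowth : ∀ x₁ ∈ Icc (t / 4 - t / 8) (3 * t / 4 + t / 8), ∀ x₂ ∈ Icc 0 (t / 4),
      u (x₁ • e2 0 + x₂ • e2 1) ≤ m + 2 * b * x₂ := fun x₁ h₁ x₂ h₂ => by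
    have hvert : u (x₁ • e2 0 + x₂ • e2 1) ≤ u (x₁ • e2 0) + b * x₂ :=
      apply_add_smul_le_of_abs_fderiv_le (fun x hx => (hu_at x hx).differentiableAt (by norm_num))
        hb_vert h₂.1 fun r hr => hrect x₁ h₁ r ⟨hr.1, hr.2.trans h₂.2⟩
    have hm_axis : u (x₁ • e2 0) ≤ m := by
      simpa [pt_eq_smul_add_smul] using haxis x₁ ⟨by linarith [h₁.1], by linarith [h₁.2]⟩
    linarith [mul_nonneg hb_nonneg h₂.1]
  have hintegral : ∫ x₂ in (0 : ℝ)..(t / 4), (m + 2 * b * x₂)⁻¹ ≤ 64 * C₀ * b / t ^ 2 := by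
    refine (integral_inv_le_of_convexOn_of_le_mul isOpen_ball hu hconv hpos (inv_pos.2 hC₀)
      (fun x hx => (hdet x hx).trans (detHess_le_secondDirDeriv_mul (hu_at x hx))) hb_vert
      (by linarith) (by linarith) (by linarith) hrect (by fun_prop)
      (fun x₂ h₂ => by have := h₂.1; positivity)
      (hgrowth _ (left_mem_Icc.2 (by linarith)))
      (hgrowth _ (right_mem_Icc.2 (by linarith)))).trans_eq ?_
    field_simp
    ring
  refine ⟨hintegral, ?_⟩
  convert one_add_mul_div_le_exp_of_integral_inv_le hm (by positivity) (by positivity) hintegral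
    using 2 <;> ring

/-- under the hypotheses of Statement 14, one has
64 C₀ b / t² ≥ ∫₀^{t/4} (m + 2b x₂)⁻¹ dx₂, and consequently
exp(128 C₀ b²/t²) ≥ 1 + (bt/2)/m. -/
theorem modulus_of_convexity_integral_inequality
    (t C₀ b m τ : ℝ) (ht : 0 < t) (hC₀ : 0 < C₀) (hm : 0 < m)
    (hτ₀ : 0 < τ) (hτt : τ ≤ t)
    (u : E2 → ℝ) (U : Set E2) (hU : IsOpen U) (hUt : closedBall (0:E2) t ⊆ U)
    (hu : ContDiffOn ℝ 2 u U)
    (hconv : ConvexOn ℝ (closedBall (0:E2) t) u)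
    (hu0 : u 0 = 0)
    (hpos : ∀ x ∈ closedBall (0:E2) t, 0 ≤ u x)
    (hdet : ∀ x ∈ closedBall (0:E2) t, C₀⁻¹ ≤ detHess u x)
    (hb : ∀ x ∈ closedBall (0:E2) t, ‖gradient u x‖ ≤ b)
    (haxis : ∀ x₁ : ℝ, x₁ ∈ Set.Ioo (-τ) t → u (pt x₁ 0) ≤ m) :
    (∫ x₂ in (0:ℝ)..(t / 4), (m + 2 * b * x₂)⁻¹) ≤ 64 * C₀ * b / t ^ 2 ∧
    1 + (b * t / 2) / m ≤ Real.exp (128 * C₀ * b ^ 2 / t ^ 2) := by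
  have hsub : ball (0 : E2) t ⊆ closedBall 0 t := ball_subset_closedBall
  exact modulus_of_convexity_integral_inequality_general ht hC₀ hm (hu.mono (hsub.trans hUt))
    (hconv.subset hsub (convex_ball 0 t)) (fun x hx => hpos x (hsub hx))
    (fun x hx => hdet x (hsub hx)) (fun x hx => hb x (hsub hx))
    fun x₁ hx₁ => haxis x₁ ⟨by linarith [hx₁.1], hx₁.2⟩
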